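/- Suppose c > 0 and 0 < γ < h. Then lim_{α↓0} α^{1−γ/k}·J₁(α)/J(α) = (c·k!/F^{(k)}(0))^{1/k}, and moreover J(α) → ∞ as α ↓ 0. (The limit (c·k!/F^{(k)}(0))^{1/k} is the unique maximizer s* of the strictly concave function G(s) = μ·c·s − μ·F^{(k)}(0)·s^{k+1}/(k+1)! on (0,∞).) -/

import Mathlib

open Filter Set Topology MeasureTheory

/-- `J(α) = ∫_0^∞ exp{λ(α) ∫_0^x F̄(α u) du - μ x} dx` for the `M/M/1+GI` queue
with `ρ(α) = 1 + c α^γ`, `λ(α) = ρ(α) μ`, patience CDF `x ↦ F(α x)`. -/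
noncomputable def Jq (F : ℝ → ℝ) (μ c γ α : ℝ) : ℝ :=
  ∫ x in Set.Ioi (0 : ℝ),
    Real.exp ((1 + c * α ^ γ) * μ * (∫ u in (0 : ℝ)..x, (1 - F (α * u))) - μ * x)

/-- `J₁(α) = ∫_0^∞ x exp{λ(α) ∫_0^x F̄(α u) du - μ x} dx`. -/
noncomputable def J1q (F : ℝ → ℝ) (μ c γ α : ℝ) : ℝ :=
  ∫ x in Set.Ioi (0 : ℝ),
    x * Real.exp ((1 + c * α ^ γ) * μ * (∫ u in (0 : ℝ)..x, (1 - F (α * u))) - μ * x)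

/-!
The integrand of `J(α)` is `exp` of the primitive of the drift `g(x) = λ(α) F̄(α x) - μ`, which is
decreasing because `F` is increasing. For any density `exp (∫ g)` on `(0, ∞)` with decreasing `g`
the mean lies in `[l - 1 / g(l), r - 1 / g(r)]` as soon as `g(r) < 0 < g(l)`: beyond `r` the
density falls faster than an exponential of rate `-g(r)`, and below `l` it rises faster than one
of rate `g(l)`. At `x = v α^{-(1 - γ/k)}` the drift is `α^γ (G'(v) + o(1))`, which for every
`v ≠ s*` has the sign of `s* - v`; the corrections `1 / g` are of order `α^{-γ}`, negligible on the
scale `α^{-(1 - γ/k)}` because `γ < k / (k + 1)`. Letting `v` tend to `s*` from both sides gives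
the limit.
-/

section ExponentialWeights

variable {f h : ℝ → ℝ} {κ a l r : ℝ}

lemma integrableOn_pow_mul_Ioi_of_isBigO_exp (hκ : κ < 0) (hf : ContinuousOn f (Ici a))
    (hO : f =O[atTop] fun x => Real.exp (κ * x)) (n : ℕ) :
    IntegrableOn (fun x => x ^ n * f x) (Ioi a) := by
  have hpow : (fun x : ℝ => x ^ n) =O[atTop] fun x => Real.exp (-κ / 2 * x) :=
    (isLittleO_pow_exp_pos_mul_atTop n (by linarith)).isBigO
  refine integrable_of_isBigO_exp_neg (b := -κ / 2) (by linarith)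
    ((continuous_pow n).continuousOn.mul hf) ((hpow.mul hO).congr_right fun x => ?_)
  rw [← Real.exp_add]
  ring_nf

lemma integrableOn_sub_mul_exp_Ioi (hκ : κ < 0) (m r : ℝ) :
    IntegrableOn (fun x => (x - m) * Real.exp (κ * x)) (Ioi r) := by
  have hid := integrableOn_pow_mul_Ioi_of_isBigO_exp (a := r) hκ
    (f := fun x => Real.exp (κ * x)) (by fun_prop) (Asymptotics.isBigO_refl _ _) 1
  simp only [pow_one] at hid
  simp only [sub_mul]
  exact hid.sub ((integrableOn_exp_mul_Ioi hκ r).const_mul m)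

lemma hasDerivAt_sub_div_mul_exp (hκ : κ ≠ 0) (r x : ℝ) :
    HasDerivAt (fun x => (x - r) / κ * Real.exp (κ * x))
      ((x - (r - κ⁻¹)) * Real.exp (κ * x)) x := by
  have hexp : HasDerivAt (fun x => Real.exp (κ * x)) (Real.exp (κ * x) * κ) x := by
    simpa using ((hasDerivAt_id x).const_mul κ).exp
  refine ((((hasDerivAt_id x).sub_const r).div_const κ).mul hexp).congr_deriv ?_
  simp only [id]
  field_simp
  ring

lemma integral_Ioi_sub_mul_exp_eq_zero (hκ : κ < 0) (r : ℝ) :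
    ∫ x in Ioi r, (x - (r - κ⁻¹)) * Real.exp (κ * x) = 0 := by
  have hderiv := hasDerivAt_sub_div_mul_exp hκ.ne r
  have hint := integrableOn_sub_mul_exp_Ioi hκ (r - κ⁻¹) r
  have hprim : IntegrableOn (fun x => (x - r) / κ * Real.exp (κ * x)) (Ioi r) := by
    simp only [div_mul_eq_mul_div]
    exact (integrableOn_sub_mul_exp_Ioi hκ r r).div_const κ
  have hlim := tendsto_zero_of_hasDerivAt_of_integrableOn_Ioi (fun x _ => hderiv x) hint hprim
  simpa using integral_Ioi_of_hasDerivAt_of_tendsto' (fun x _ => hderiv x) hint hlim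

lemma intervalIntegral_sub_mul_exp (hκ : κ ≠ 0) (a l : ℝ) :
    ∫ x in a..l, (x - (l - κ⁻¹)) * Real.exp (κ * x) = (l - a) / κ * Real.exp (κ * a) := by
  rw [intervalIntegral.integral_eq_sub_of_hasDerivAt
    (fun x _ => hasDerivAt_sub_div_mul_exp hκ l x)
    ((by fun_prop : Continuous _).intervalIntegrable a l)]
  ring

/- Chebyshev's association inequality: `r - κ⁻¹` is the mean of the exponential distribution with
density proportional to `exp (κ x)` on `(r, ∞)`, and weighting by an antitone `h` can only lower
the mean. -/
lemma setIntegral_sub_mul_exp_mul_nonpos (hκ : κ < 0) (har : a ≤ r)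
    (hh_nonneg : ∀ x ∈ Ioc a r, 0 ≤ h x) (hh : AntitoneOn h (Ici r))
    (hint : IntegrableOn (fun x => (x - (r - κ⁻¹)) * (Real.exp (κ * x) * h x)) (Ioi a)) :
    ∫ x in Ioi a, (x - (r - κ⁻¹)) * (Real.exp (κ * x) * h x) ≤ 0 := by
  have hexp_eq := integral_Ioi_sub_mul_exp_eq_zero hκ r
  set m := r - κ⁻¹
  have hrm : r ≤ m := by linarith [inv_lt_zero.2 hκ]
  have htail_int := hint.mono_set (Ioi_subset_Ioi har)
  have hhead : ∫ x in a..r, (x - m) * (Real.exp (κ * x) * h x) ≤ 0 := by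
    rw [intervalIntegral.integral_of_le har]
    exact setIntegral_nonpos measurableSet_Ioc fun x hx =>
      mul_nonpos_of_nonpos_of_nonneg (by linarith [hx.2])
        (mul_nonneg (Real.exp_pos _).le (hh_nonneg x hx))
  have htail : ∫ x in Ioi r, (x - m) * (Real.exp (κ * x) * h x) ≤ 0 := by
    calc ∫ x in Ioi r, (x - m) * (Real.exp (κ * x) * h x)
        ≤ ∫ x in Ioi r, h m * ((x - m) * Real.exp (κ * x)) := by
          refine setIntegral_mono_on htail_int
            ((integrableOn_sub_mul_exp_Ioi hκ m r).const_mul _) measurableSet_Ioi fun x hx => ?_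
          have hassoc : (x - m) * (h x - h m) ≤ 0 :=
            antivaryOn_iff_forall_mul_nonpos.1 (monotoneOn_id.antivaryOn hh)
              (mem_Ici.2 hrm) (mem_Ici.2 (le_of_lt hx))
          linarith [mul_nonpos_of_nonneg_of_nonpos (Real.exp_pos (κ * x)).le hassoc]
      _ = 0 := by rw [integral_const_mul, hexp_eq, mul_zero]
  linarith [intervalIntegral.integral_interval_add_Ioi hint htail_int]

lemma setIntegral_sub_mul_exp_mul_nonneg (hκ : 0 < κ) (hal : a ≤ l)
    (hh_nonneg : ∀ x, a ≤ x → 0 ≤ h x) (hh : MonotoneOn h (Icc a l))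
    (hint : IntegrableOn (fun x => (x - (l - κ⁻¹)) * (Real.exp (κ * x) * h x)) (Ioi a)) :
    0 ≤ ∫ x in Ioi a, (x - (l - κ⁻¹)) * (Real.exp (κ * x) * h x) := by
  have hexp_eq := intervalIntegral_sub_mul_exp hκ.ne' a l
  set m := l - κ⁻¹
  have hml : m ≤ l := by linarith [inv_pos.2 hκ]
  have hnonneg : ∀ b, a ≤ b → m ≤ b →
      0 ≤ ∫ x in Ioi b, (x - m) * (Real.exp (κ * x) * h x) := fun b hab hmb =>
    setIntegral_nonneg measurableSet_Ioi fun x hx =>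
      mul_nonneg (sub_nonneg.2 (hmb.trans (le_of_lt hx)))
        (mul_nonneg (Real.exp_pos _).le (hh_nonneg x (hab.trans (le_of_lt hx))))
  rcases le_total m a with hma | ham
  · exact hnonneg a le_rfl hma
  have hhead : 0 ≤ ∫ x in a..l, (x - m) * (Real.exp (κ * x) * h x) := by
    calc 0 ≤ h m * ((l - a) / κ * Real.exp (κ * a)) :=
          mul_nonneg (hh_nonneg m ham) (mul_nonneg
            (div_nonneg (sub_nonneg.2 hal) hκ.le) (Real.exp_pos _).le)
      _ = ∫ x in a..l, h m * ((x - m) * Real.exp (κ * x)) := by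
          rw [intervalIntegral.integral_const_mul, hexp_eq]
      _ ≤ ∫ x in a..l, (x - m) * (Real.exp (κ * x) * h x) := by
          refine intervalIntegral.integral_mono_on hal
            ((by fun_prop : Continuous _).intervalIntegrable a l)
            ((intervalIntegrable_iff_integrableOn_Ioc_of_le hal).2
              (hint.mono_set Ioc_subset_Ioi_self)) fun x hx => ?_
          have hassoc : 0 ≤ (x - m) * (h x - h m) :=
            monovaryOn_iff_forall_mul_nonneg.1 (monotoneOn_id.monovaryOn hh) ⟨ham, hml⟩ hx
          linarith [mul_nonneg (Real.exp_pos (κ * x)).le hassoc]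
  linarith [hnonneg l hal hml,
    intervalIntegral.integral_interval_add_Ioi hint (hint.mono_set (Ioi_subset_Ioi hal))]

end ExponentialWeights

lemma integrableOn_sub_mul {f : ℝ → ℝ} {s : Set ℝ} (hint : IntegrableOn f s)
    (hint1 : IntegrableOn (fun x => x * f x) s) (m : ℝ) :
    IntegrableOn (fun x => (x - m) * f x) s := by
  simp only [sub_mul]
  exact hint1.sub (hint.const_mul m)

lemma setIntegral_sub_mul {f : ℝ → ℝ} {s : Set ℝ} (hint : IntegrableOn f s)
    (hint1 : IntegrableOn (fun x => x * f x) s) (m : ℝ) :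
    ∫ x in s, (x - m) * f x = (∫ x in s, x * f x) - m * ∫ x in s, f x := by
  rw [← integral_const_mul, ← integral_sub hint1 (hint.const_mul m)]
  simp only [sub_mul]

section Potential

/-- The primitive vanishing at `0` of a drift `g`, so that `exp (potential g)` is the unnormalized
density on `(0, ∞)` with logarithmic derivative `g`. -/
noncomputable def potential (g : ℝ → ℝ) (x : ℝ) : ℝ := ∫ u in (0 : ℝ)..x, g u

variable {g : ℝ → ℝ} {l r x y : ℝ}

lemma intervalIntegrable_of_antitoneOn_Ici (hg : AntitoneOn g (Ici 0)) (hx : 0 ≤ x)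
    (hy : 0 ≤ y) : IntervalIntegrable g volume x y :=
  (hg.mono (ordConnected_Ici.uIcc_subset hx hy)).intervalIntegrable

lemma potential_sub_potential (hg : AntitoneOn g (Ici 0)) (hx : 0 ≤ x) (hy : 0 ≤ y) :
    potential g y - potential g x = ∫ u in x..y, g u :=
  intervalIntegral.integral_interval_sub_left (intervalIntegrable_of_antitoneOn_Ici hg le_rfl hy)
    (intervalIntegrable_of_antitoneOn_Ici hg le_rfl hx)

lemma continuousOn_potential (hg : AntitoneOn g (Ici 0)) :
    ContinuousOn (potential g) (Ici 0) := fun x hx => by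
  have hx1 : (0 : ℝ) ≤ x + 1 := by linarith [mem_Ici.1 hx]
  have hcont := intervalIntegral.continuousOn_primitive_interval'
    (intervalIntegrable_of_antitoneOn_Ici hg le_rfl hx1) left_mem_uIcc
  rw [uIcc_of_le hx1] at hcont
  refine (hcont x ⟨hx, by linarith⟩).mono_of_mem_nhdsWithin ?_
  rw [← Ici_inter_Iic]
  exact inter_mem self_mem_nhdsWithin (mem_nhdsWithin_of_mem_nhds (Iic_mem_nhds (by linarith)))

lemma antitoneOn_potential_sub_mul (hg : AntitoneOn g (Ici 0)) (hr : 0 ≤ r) :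
    AntitoneOn (fun x => potential g x - g r * x) (Ici r) := fun x hx y hy hxy => by
  have hx0 : 0 ≤ x := hr.trans hx
  have hy0 : 0 ≤ y := hr.trans hy
  have hle : ∫ u in x..y, g u ≤ ∫ _ in x..y, g r :=
    intervalIntegral.integral_mono_on hxy (intervalIntegrable_of_antitoneOn_Ici hg hx0 hy0)
      intervalIntegrable_const fun u hu =>
        hg hr (hx0.trans hu.1) ((mem_Ici.1 hx).trans hu.1)
  rw [← potential_sub_potential hg hx0 hy0, intervalIntegral.integral_const,
    smul_eq_mul] at hle
  linarith

lemma monotoneOn_potential_sub_mul (hg : AntitoneOn g (Ici 0)) (l : ℝ) :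
    MonotoneOn (fun x => potential g x - g l * x) (Icc 0 l) := fun x hx y hy hxy => by
  have hle : ∫ _ in x..y, g l ≤ ∫ u in x..y, g u :=
    intervalIntegral.integral_mono_on hxy intervalIntegrable_const
      (intervalIntegrable_of_antitoneOn_Ici hg hx.1 hy.1) fun u hu =>
        hg (hx.1.trans hu.1) (hx.1.trans hx.2) (hu.2.trans hy.2)
  rw [← potential_sub_potential hg hx.1 hy.1, intervalIntegral.integral_const,
    smul_eq_mul] at hle
  linarith

lemma exp_potential_eq (g : ℝ → ℝ) (κ x : ℝ) :
    Real.exp (potential g x) = Real.exp (κ * x) * Real.exp (potential g x - κ * x) := by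
  rw [← Real.exp_add, add_sub_cancel]

lemma integrableOn_pow_mul_exp_potential (hg : AntitoneOn g (Ici 0)) (hr : 0 ≤ r) (hgr : g r < 0)
    (n : ℕ) : IntegrableOn (fun x => x ^ n * Real.exp (potential g x)) (Ioi 0) := by
  refine integrableOn_pow_mul_Ioi_of_isBigO_exp hgr (continuousOn_potential hg).rexp
    (.of_bound (Real.exp (potential g r - g r * r)) ?_) n
  filter_upwards [Ici_mem_atTop r] with x hx
  rw [Real.norm_eq_abs, Real.abs_exp, Real.norm_eq_abs, Real.abs_exp, exp_potential_eq g (g r),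
    mul_comm]
  exact mul_le_mul_of_nonneg_right
    (Real.exp_le_exp.2 (antitoneOn_potential_sub_mul hg hr self_mem_Ici hx hx)) (Real.exp_pos _).le

lemma integrableOn_exp_potential (hg : AntitoneOn g (Ici 0)) (hr : 0 ≤ r) (hgr : g r < 0) :
    IntegrableOn (fun x => Real.exp (potential g x)) (Ioi 0) := by
  simpa using integrableOn_pow_mul_exp_potential hg hr hgr 0

lemma integrableOn_mul_exp_potential (hg : AntitoneOn g (Ici 0)) (hr : 0 ≤ r) (hgr : g r < 0) :
    IntegrableOn (fun x => x * Real.exp (potential g x)) (Ioi 0) := by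
  simpa using integrableOn_pow_mul_exp_potential hg hr hgr 1

lemma integral_exp_potential_pos (hg : AntitoneOn g (Ici 0)) (hr : 0 ≤ r) (hgr : g r < 0) :
    0 < ∫ x in Ioi (0 : ℝ), Real.exp (potential g x) :=
  have : NeZero (volume.restrict (Ioi (0 : ℝ))) := ⟨by simp⟩
  integral_exp_pos (integrableOn_exp_potential hg hr hgr)

lemma mean_exp_potential_le (hg : AntitoneOn g (Ici 0)) (hr : 0 ≤ r) (hgr : g r < 0) :
    (∫ x in Ioi (0 : ℝ), x * Real.exp (potential g x)) /
      (∫ x in Ioi (0 : ℝ), Real.exp (potential g x)) ≤ r - (g r)⁻¹ := by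
  have hint := integrableOn_exp_potential hg hr hgr
  have hint1 := integrableOn_mul_exp_potential hg hr hgr
  have hcenter := integrableOn_sub_mul hint hint1 (r - (g r)⁻¹)
  have hcenter_eq := setIntegral_sub_mul hint hint1 (r - (g r)⁻¹)
  simp only [exp_potential_eq g (g r)] at hcenter
  have hle := setIntegral_sub_mul_exp_mul_nonpos hgr hr (fun x _ => (Real.exp_pos _).le)
    (Real.exp_monotone.comp_antitoneOn (antitoneOn_potential_sub_mul hg hr)) hcenter
  simp only [← exp_potential_eq g (g r)] at hle
  rw [div_le_iff₀ (integral_exp_potential_pos hg hr hgr)]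
  linarith

lemma le_mean_exp_potential (hg : AntitoneOn g (Ici 0)) (hl : 0 ≤ l) (hgl : 0 < g l) (hr : 0 ≤ r)
    (hgr : g r < 0) :
    l - (g l)⁻¹ ≤ (∫ x in Ioi (0 : ℝ), x * Real.exp (potential g x)) /
      (∫ x in Ioi (0 : ℝ), Real.exp (potential g x)) := by
  have hint := integrableOn_exp_potential hg hr hgr
  have hint1 := integrableOn_mul_exp_potential hg hr hgr
  have hcenter := integrableOn_sub_mul hint hint1 (l - (g l)⁻¹)
  have hcenter_eq := setIntegral_sub_mul hint hint1 (l - (g l)⁻¹)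
  simp only [exp_potential_eq g (g l)] at hcenter
  have hle := setIntegral_sub_mul_exp_mul_nonneg hgl hl (fun x _ => (Real.exp_pos _).le)
    (Real.exp_monotone.comp_monotoneOn (monotoneOn_potential_sub_mul hg l)) hcenter
  simp only [← exp_potential_eq g (g l)] at hle
  rw [le_div_iff₀ (integral_exp_potential_pos hg hr hgr)]
  linarith

lemma le_integral_exp_potential (hg : AntitoneOn g (Ici 0)) (hl : 0 ≤ l) (hgl : 0 ≤ g l)
    (hint : IntegrableOn (fun x => Real.exp (potential g x)) (Ioi 0)) :
    l ≤ ∫ x in Ioi (0 : ℝ), Real.exp (potential g x) := by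
  have hone : ∀ x ∈ Ioc 0 l, 1 ≤ Real.exp (potential g x) := fun x hx => by
    have hmono := monotoneOn_potential_sub_mul hg l ⟨le_rfl, hl⟩ ⟨hx.1.le, hx.2⟩ hx.1.le
    have hzero : potential g 0 = 0 := intervalIntegral.integral_same
    rw [Real.one_le_exp_iff]
    linarith [mul_nonneg hgl hx.1.le]
  calc l = ∫ _ in Ioc 0 l, (1 : ℝ) := by simp [hl]
    _ ≤ ∫ x in Ioc 0 l, Real.exp (potential g x) :=
        setIntegral_mono_on (by simp) (hint.mono_set Ioc_subset_Ioi_self) measurableSet_Ioc hone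
    _ ≤ ∫ x in Ioi (0 : ℝ), Real.exp (potential g x) :=
        setIntegral_mono_set hint (Eventually.of_forall fun x => (Real.exp_pos _).le)
          Ioc_subset_Ioi_self.eventuallyLE

end Potential

lemma tendsto_inv_pow_smul_of_iteratedDerivWithin_eq_zero {E : Type*} [NormedAddCommGroup E]
    [NormedSpace ℝ E] {f : ℝ → E} {s : Set ℝ} {x₀ : ℝ} {n : ℕ} (hs : Convex ℝ s) (hx₀ : x₀ ∈ s)
    (hf : ContDiffOn ℝ n f s) (hderivs : ∀ j < n, iteratedDerivWithin j f s x₀ = 0) :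
    Tendsto (fun x => ((x - x₀) ^ n)⁻¹ • f x) (𝓝[s \ {x₀}] x₀)
      (𝓝 ((n.factorial : ℝ)⁻¹ • iteratedDerivWithin n f s x₀)) := by
  have htaylor := ((taylor_tendsto hs hx₀ hf).mono_left
    (nhdsWithin_mono x₀ (sdiff_subset (t := {x₀})))).add_const
      ((n.factorial : ℝ)⁻¹ • iteratedDerivWithin n f s x₀)
  rw [zero_add] at htaylor
  refine htaylor.congr' ?_
  filter_upwards [self_mem_nhdsWithin] with x hx
  have hleading : taylorWithinEval f n s x₀ x =
      (x - x₀) ^ n • (n.factorial : ℝ)⁻¹ • iteratedDerivWithin n f s x₀ := by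
    rw [taylor_within_apply, Finset.sum_range_succ, Finset.sum_eq_zero fun j hj => by
      rw [hderivs j (Finset.mem_range.1 hj), smul_zero], zero_add, smul_smul, mul_comm]
  rw [hleading, smul_sub, inv_smul_smul₀ (pow_ne_zero n (sub_ne_zero.2 hx.2)), sub_add_cancel]

lemma tendsto_rpow_nhdsGT_zero {p : ℝ} (hp : 0 < p) :
    Tendsto (fun x : ℝ => x ^ p) (𝓝[>] 0) (𝓝[>] 0) := by
  refine tendsto_nhdsWithin_iff.2 ⟨?_, ?_⟩
  · have hcont := (Real.continuousAt_rpow_const 0 p (Or.inr hp.le)).tendsto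
    rw [Real.zero_rpow hp.ne'] at hcont
    exact hcont.mono_left nhdsWithin_le_nhds
  · filter_upwards [self_mem_nhdsWithin] with x hx using Real.rpow_pos_of_pos hx p

lemma tendsto_comp_rpow_mul_div_rpow {F : ℝ → ℝ} {k γ a v : ℝ} (hk : 0 < k) (hγ : 0 < γ)
    (hv : 0 < v) (hF : Tendsto (fun x => F x / x ^ k) (𝓝[>] 0) (𝓝 a)) :
    Tendsto (fun α : ℝ => F (α ^ (γ / k) * v) / α ^ γ) (𝓝[>] 0) (𝓝 (a * v ^ k)) := by
  have hscale : Tendsto (fun α : ℝ => α ^ (γ / k) * v) (𝓝[>] 0) (𝓝[>] 0) := by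
    have hlim := (tendsto_rpow_nhdsGT_zero (div_pos hγ hk)).mono_right nhdsWithin_le_nhds
    refine tendsto_nhdsWithin_iff.2 ⟨by simpa using hlim.mul_const v, ?_⟩
    filter_upwards [self_mem_nhdsWithin] with α hα using mul_pos (Real.rpow_pos_of_pos hα _) hv
  refine ((hF.comp hscale).mul_const (v ^ k)).congr' ?_
  filter_upwards [self_mem_nhdsWithin] with α (hα : 0 < α)
  have hvk := (Real.rpow_pos_of_pos hv k).ne'
  rw [Function.comp_apply, Real.mul_rpow (by positivity) hv.le, ← Real.rpow_mul hα.le,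
    div_mul_cancel₀ γ hk.ne', ← div_div, div_mul_cancel₀ _ hvk]

section Queue

/-- The logarithmic derivative `λ(α) F̄(α x) - μ` of the integrand of `J(α)`: the arrival rate of
customers willing to wait `x`, minus the service rate. -/
noncomputable def netDrift (F : ℝ → ℝ) (μ c γ α x : ℝ) : ℝ :=
  (1 + c * α ^ γ) * μ * (1 - F (α * x)) - μ

variable {F : ℝ → ℝ} {k a μ c γ α v : ℝ}

lemma monotoneOn_comp_mul_left (hF : MonotoneOn F (Ici 0)) (hα : 0 ≤ α) :
    MonotoneOn (fun x => F (α * x)) (Ici 0) := fun _ hx _ hy hxy =>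
  hF (mul_nonneg hα hx) (mul_nonneg hα hy) (mul_le_mul_of_nonneg_left hxy hα)

lemma antitoneOn_netDrift (hF : MonotoneOn F (Ici 0)) (hα : 0 ≤ α) (hμ : 0 ≤ μ) (hc : 0 ≤ c) :
    AntitoneOn (netDrift F μ c γ α) (Ici 0) := fun x hx y hy hxy => by
  have hle := monotoneOn_comp_mul_left hF hα hx hy hxy
  unfold netDrift
  gcongr

lemma potential_netDrift (hF : MonotoneOn F (Ici 0)) (hα : 0 ≤ α) {x : ℝ} (hx : 0 ≤ x) :
    potential (netDrift F μ c γ α) x =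
      (1 + c * α ^ γ) * μ * (∫ u in (0 : ℝ)..x, (1 - F (α * u))) - μ * x := by
  have hint : IntervalIntegrable (fun u => 1 - F (α * u)) volume 0 x :=
    intervalIntegrable_of_antitoneOn_Ici
      (fun _ hy _ hz hyz => sub_le_sub_left (monotoneOn_comp_mul_left hF hα hy hz hyz) 1) le_rfl hx
  simp only [potential, netDrift]
  rw [intervalIntegral.integral_sub (hint.const_mul _) intervalIntegrable_const,
    intervalIntegral.integral_const_mul, intervalIntegral.integral_const, sub_zero, smul_eq_mul,
    mul_comm x]

lemma Jq_eq_integral_exp_potential (hF : MonotoneOn F (Ici 0)) (hα : 0 ≤ α) :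
    Jq F μ c γ α = ∫ x in Ioi (0 : ℝ), Real.exp (potential (netDrift F μ c γ α) x) :=
  setIntegral_congr_fun measurableSet_Ioi fun x hx => by
    simp only [potential_netDrift hF hα (le_of_lt hx)]

lemma J1q_eq_integral_mul_exp_potential (hF : MonotoneOn F (Ici 0)) (hα : 0 ≤ α) :
    J1q F μ c γ α = ∫ x in Ioi (0 : ℝ), x * Real.exp (potential (netDrift F μ c γ α) x) :=
  setIntegral_congr_fun measurableSet_Ioi fun x hx => by
    simp only [potential_netDrift hF hα (le_of_lt hx)]

/- The limit is `G'(v)` for the rescaled exponent `G`. -/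
lemma tendsto_netDrift_div_rpow (hk : 0 < k) (hγ : 0 < γ) (hv : 0 < v)
    (hF : Tendsto (fun x => F x / x ^ k) (𝓝[>] 0) (𝓝 a)) :
    Tendsto (fun α : ℝ => netDrift F μ c γ α (v / α ^ (1 - γ / k)) / α ^ γ) (𝓝[>] 0)
      (𝓝 (μ * (c - a * v ^ k))) := by
  have hρ : Tendsto (fun α : ℝ => 1 + c * α ^ γ) (𝓝[>] 0) (𝓝 1) := by
    simpa using (((tendsto_rpow_nhdsGT_zero hγ).mono_right
      nhdsWithin_le_nhds).const_mul c).const_add 1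
  have hlim := ((hρ.mul (tendsto_comp_rpow_mul_div_rpow hk hγ hv hF)).const_sub c).const_mul μ
  rw [one_mul] at hlim
  refine hlim.congr' ?_
  filter_upwards [self_mem_nhdsWithin] with α (hα : 0 < α)
  have harg : α * (v / α ^ (1 - γ / k)) = α ^ (γ / k) * v := by
    rw [Real.rpow_sub hα, Real.rpow_one]
    field_simp
  rw [netDrift, harg]
  field_simp
  ring

lemma eventually_netDrift_pos (hk : 0 < k) (hμ : 0 < μ) (hγ : 0 < γ) (hv : 0 < v)
    (hF : Tendsto (fun x => F x / x ^ k) (𝓝[>] 0) (𝓝 a)) (hvc : a * v ^ k < c) :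
    ∀ᶠ α in 𝓝[>] (0 : ℝ), 0 < netDrift F μ c γ α (v / α ^ (1 - γ / k)) := by
  filter_upwards [self_mem_nhdsWithin, (tendsto_netDrift_div_rpow hk hγ hv hF).eventually_const_lt
    (mul_pos hμ (sub_pos.2 hvc))] with α hα hpos
  exact (div_pos_iff_of_pos_right (Real.rpow_pos_of_pos hα γ)).1 hpos

lemma eventually_netDrift_neg (hk : 0 < k) (hμ : 0 < μ) (hγ : 0 < γ) (hv : 0 < v)
    (hF : Tendsto (fun x => F x / x ^ k) (𝓝[>] 0) (𝓝 a)) (hvc : c < a * v ^ k) :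
    ∀ᶠ α in 𝓝[>] (0 : ℝ), netDrift F μ c γ α (v / α ^ (1 - γ / k)) < 0 := by
  filter_upwards [self_mem_nhdsWithin, (tendsto_netDrift_div_rpow hk hγ hv hF).eventually_lt_const
    (mul_neg_of_pos_of_neg hμ (sub_neg.2 hvc))] with α hα hneg
  rwa [div_lt_iff₀ (Real.rpow_pos_of_pos hα γ), zero_mul] at hneg

lemma tendsto_rpow_mul_sub_inv_netDrift (hk : 0 < k) (hμ : μ ≠ 0) (hγ : 0 < γ)
    (hγk : γ < k / (k + 1)) (hv : 0 < v) (hF : Tendsto (fun x => F x / x ^ k) (𝓝[>] 0) (𝓝 a))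
    (hvc : a * v ^ k ≠ c) :
    Tendsto (fun α : ℝ => α ^ (1 - γ / k) *
      (v / α ^ (1 - γ / k) - (netDrift F μ c γ α (v / α ^ (1 - γ / k)))⁻¹)) (𝓝[>] 0) (𝓝 v) := by
  have hexponent : 0 < 1 - γ / k - γ := by
    rw [lt_div_iff₀ (by linarith)] at hγk
    rw [sub_sub, sub_pos, ← lt_sub_iff_add_lt, div_lt_iff₀ hk]
    linarith
  have htail := ((tendsto_rpow_nhdsGT_zero hexponent).mono_right nhdsWithin_le_nhds).div
    (tendsto_netDrift_div_rpow (μ := μ) hk hγ hv hF) (mul_ne_zero hμ (sub_ne_zero.2 hvc.symm))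
  rw [zero_div] at htail
  have hlim := htail.const_sub v
  rw [sub_zero] at hlim
  refine hlim.congr' ?_
  filter_upwards [self_mem_nhdsWithin] with α hα
  have hγ0 := (Real.rpow_pos_of_pos hα γ).ne'
  have hb0 := (Real.rpow_pos_of_pos hα (1 - γ / k)).ne'
  rw [Pi.div_apply, Real.rpow_sub hα (1 - γ / k), div_div_div_cancel_right₀ hγ0, mul_sub,
    mul_div_cancel₀ _ hb0, ← div_eq_mul_inv]

lemma eventually_rpow_mul_J1q_div_Jq_lt (hk : 0 < k) (hμ : 0 < μ) (hγ : 0 < γ)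
    (hγk : γ < k / (k + 1)) (hc : 0 ≤ c) (hF_mono : MonotoneOn F (Ici 0))
    (hF : Tendsto (fun x => F x / x ^ k) (𝓝[>] 0) (𝓝 a)) {u : ℝ} (hv : 0 < v)
    (hvc : c < a * v ^ k) (hvu : v < u) :
    ∀ᶠ α in 𝓝[>] (0 : ℝ), α ^ (1 - γ / k) * (J1q F μ c γ α / Jq F μ c γ α) < u := by
  filter_upwards [self_mem_nhdsWithin, eventually_netDrift_neg hk hμ hγ hv hF hvc,
    (tendsto_rpow_mul_sub_inv_netDrift hk hμ.ne' hγ hγk hv hF hvc.ne').eventually_lt_const hvu]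
    with α (hα : 0 < α) hneg hlt
  rw [J1q_eq_integral_mul_exp_potential hF_mono hα.le, Jq_eq_integral_exp_potential hF_mono hα.le]
  refine lt_of_le_of_lt ?_ hlt
  gcongr
  exact mean_exp_potential_le (antitoneOn_netDrift hF_mono hα.le hμ.le hc) (by positivity) hneg

lemma eventually_lt_rpow_mul_J1q_div_Jq (hk : 0 < k) (hμ : 0 < μ) (hγ : 0 < γ)
    (hγk : γ < k / (k + 1)) (hc : 0 ≤ c) (hF_mono : MonotoneOn F (Ici 0))
    (hF : Tendsto (fun x => F x / x ^ k) (𝓝[>] 0) (𝓝 a)) {u w : ℝ} (hv : 0 < v)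
    (hvc : a * v ^ k < c) (hw : 0 < w) (hwc : c < a * w ^ k) (huv : u < v) :
    ∀ᶠ α in 𝓝[>] (0 : ℝ), u < α ^ (1 - γ / k) * (J1q F μ c γ α / Jq F μ c γ α) := by
  filter_upwards [self_mem_nhdsWithin, eventually_netDrift_pos hk hμ hγ hv hF hvc,
    eventually_netDrift_neg hk hμ hγ hw hF hwc,
    (tendsto_rpow_mul_sub_inv_netDrift hk hμ.ne' hγ hγk hv hF hvc.ne).eventually_const_lt huv]
    with α (hα : 0 < α) hpos hneg hlt
  rw [J1q_eq_integral_mul_exp_potential hF_mono hα.le, Jq_eq_integral_exp_potential hF_mono hα.le]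
  refine hlt.trans_le ?_
  gcongr
  exact le_mean_exp_potential (antitoneOn_netDrift hF_mono hα.le hμ.le hc) (by positivity) hpos
    (by positivity) hneg

lemma tendsto_Jq_atTop (hk : 0 < k) (hμ : 0 < μ) (hγ : 0 < γ) (hγk : γ < k) (hc : 0 ≤ c)
    (hF_mono : MonotoneOn F (Ici 0)) (hF : Tendsto (fun x => F x / x ^ k) (𝓝[>] 0) (𝓝 a))
    {w : ℝ} (hv : 0 < v) (hvc : a * v ^ k < c) (hw : 0 < w) (hwc : c < a * w ^ k) :
    Tendsto (fun α => Jq F μ c γ α) (𝓝[>] 0) atTop := by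
  have hscale : Tendsto (fun α : ℝ => v / α ^ (1 - γ / k)) (𝓝[>] 0) atTop := by
    simp only [div_eq_mul_inv v]
    exact (tendsto_inv_nhdsGT_zero.comp (tendsto_rpow_nhdsGT_zero
      (sub_pos.2 ((div_lt_one hk).2 hγk)))).const_mul_atTop hv
  refine tendsto_atTop_mono' _ ?_ hscale
  filter_upwards [self_mem_nhdsWithin, eventually_netDrift_pos hk hμ hγ hv hF hvc,
    eventually_netDrift_neg hk hμ hγ hw hF hwc] with α (hα : 0 < α) hpos hneg
  have hanti := antitoneOn_netDrift (γ := γ) hF_mono hα.le hμ.le hc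
  rw [Jq_eq_integral_exp_potential hF_mono hα.le]
  exact le_integral_exp_potential hanti (by positivity) hpos.le
    (integrableOn_exp_potential hanti (by positivity) hneg)

end Queue

theorem mm1gi_J_limits_overloaded_general {F : ℝ → ℝ} {k a μ γ c : ℝ} (hk : 0 < k)
    (hF_mono : MonotoneOn F (Ici 0)) (ha : 0 < a)
    (hF : Tendsto (fun x => F x / x ^ k) (𝓝[>] 0) (𝓝 a))
    (hμ : 0 < μ) (hγ : 0 < γ) (hc : 0 < c) (hγh : γ < k / (k + 1)) :
    Tendsto (fun α : ℝ => α ^ (1 - γ / k) * (J1q F μ c γ α / Jq F μ c γ α)) (𝓝[>] 0)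
      (𝓝 ((c / a) ^ (1 / k))) ∧
    Tendsto (fun α : ℝ => Jq F μ c γ α) (𝓝[>] 0) atTop := by
  have hs : 0 < (c / a) ^ (1 / k) := by positivity
  have hbelow : ∀ v, 0 < v → v < (c / a) ^ (1 / k) → a * v ^ k < c := fun v hv hvs => by
    rwa [one_div, Real.lt_rpow_inv_iff_of_pos hv.le (by positivity) hk, lt_div_iff₀' ha] at hvs
  have habove : ∀ v, 0 < v → (c / a) ^ (1 / k) < v → c < a * v ^ k := fun v hv hsv => by
    rwa [one_div, Real.rpow_inv_lt_iff_of_pos (by positivity) hv.le hk, div_lt_iff₀' ha] at hsv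
  obtain ⟨w, hsw⟩ := exists_gt ((c / a) ^ (1 / k))
  have hwc := habove w (hs.trans hsw) hsw
  refine ⟨tendsto_order.2 ⟨fun u hu => ?_, fun u hu => ?_⟩, ?_⟩
  · obtain ⟨v, huv, hvs⟩ := exists_between (max_lt hu hs)
    obtain ⟨huv, hv⟩ := max_lt_iff.1 huv
    exact eventually_lt_rpow_mul_J1q_div_Jq hk hμ hγ hγh hc.le hF_mono hF hv (hbelow v hv hvs)
      (hs.trans hsw) hwc huv
  · obtain ⟨v, hsv, hvu⟩ := exists_between hu
    exact eventually_rpow_mul_J1q_div_Jq_lt hk hμ hγ hγh hc.le hF_mono hF (hs.trans hsv)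
      (habove v (hs.trans hsv) hsv) hvu
  · have hγk : γ < k := hγh.trans (div_lt_self hk (by linarith))
    exact tendsto_Jq_atTop hk hμ hγ hγk hc.le hF_mono hF (half_pos hs)
      (hbelow _ (half_pos hs) (half_lt_self hs)) (hs.trans hsw) hwc

/-- in the overloaded regime (`c > 0`, `0 < γ < h = k/(k+1)`),
`α^{1-γ/k} J₁(α)/J(α) → (c k!/F^{(k)}(0))^{1/k}` (the unique maximizer of the
strictly concave function `G(s) = μ c s - μ F^{(k)}(0) s^{k+1}/(k+1)!`), and
`J(α) → ∞` as `α ↓ 0`. -/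
theorem mm1gi_J_limits_overloaded
    (k : ℕ) (hk : 1 ≤ k)
    (F : ℝ → ℝ)
    (hF_mono : Monotone F)
    (hF_zero : ∀ x ≤ (0 : ℝ), F x = 0)
    (hF_range : ∀ x, 0 ≤ x → 0 ≤ F x ∧ F x < 1)
    (hF_lim : Tendsto F atTop (𝓝 1))
    (hF_smooth : ContDiffOn ℝ k F (Set.Ici 0))
    (hF_derivs : ∀ j < k, iteratedDerivWithin j F (Set.Ici 0) 0 = 0)
    (hF_k : 0 < iteratedDerivWithin k F (Set.Ici 0) 0)
    (μ γ c : ℝ) (hμ : 0 < μ) (hγ : 0 < γ)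
    (hc : 0 < c) (hγh : γ < (k : ℝ) / (k + 1))
    (hJ : ∀ᶠ α in 𝓝[>] (0 : ℝ), IntegrableOn
      (fun x : ℝ => Real.exp ((1 + c * α ^ γ) * μ *
        (∫ u in (0 : ℝ)..x, (1 - F (α * u))) - μ * x)) (Set.Ioi 0))
    (hJ1 : ∀ᶠ α in 𝓝[>] (0 : ℝ), IntegrableOn
      (fun x : ℝ => x * Real.exp ((1 + c * α ^ γ) * μ *
        (∫ u in (0 : ℝ)..x, (1 - F (α * u))) - μ * x)) (Set.Ioi 0)) :
    Tendsto (fun α : ℝ => α ^ (1 - γ / (k : ℝ)) * (J1q F μ c γ α / Jq F μ c γ α))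
      (𝓝[>] (0 : ℝ))
      (𝓝 ((c * (Nat.factorial k) / iteratedDerivWithin k F (Set.Ici 0) 0)
        ^ ((1 : ℝ) / (k : ℝ)))) ∧
    Tendsto (fun α : ℝ => Jq F μ c γ α) (𝓝[>] (0 : ℝ)) atTop := by
  have hF : Tendsto (fun x => F x / x ^ (k : ℝ)) (𝓝[>] 0)
      (𝓝 (iteratedDerivWithin k F (Ici 0) 0 / k.factorial)) := by
    simpa [div_eq_inv_mul] using
      tendsto_inv_pow_smul_of_iteratedDerivWithin_eq_zero (convex_Ici 0) self_mem_Ici hF_smooth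
        hF_derivs
  simpa only [div_div_eq_mul_div] using mm1gi_J_limits_overloaded_general (Nat.cast_pos.2 hk)
    (hF_mono.monotoneOn _) (by positivity) hF hμ hγ hc hγh
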